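/- Let p ≥ 5 be a prime, let a, b, c be nonzero elements of O_K, coprime in O_K, with a^p + b^p + c^p = 0, and set A = a^p, B = b^p, C = c^p. Let 𝔮 be a nonzero prime ideal of O_K not containing 2, and suppose v_𝔮(a·b·c) ≥ 1. Then v_𝔮(16·(A² + A·B + B²)) = 0 and p divides v_𝔮(16·(A·B·C)²). -/

import Mathlib

open Polynomial

/-- `K = ℚ(√5)`, the real quadratic field obtained by adjoining `√5` to `ℚ`. -/
noncomputable def K : IntermediateField ℚ ℝ := IntermediateField.adjoin ℚ {Real.sqrt 5}

/-- `O_K`, the ring of integers of `K = ℚ(√5)`. -/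
noncomputable abbrev OK : Type := NumberField.RingOfIntegers K

/-!
Since `A + B + C = 0`, the element `A` is a root of `T³ - (A² + AB + B²) T - ABC`, and so are `B`
and `C`. A prime ideal `𝔮` containing `ABC` and `A² + AB + B²` therefore contains `A`, `B` and `C`,
hence also `a`, `b` and `c`. This is excluded by coprimality, which may be read in terms of ideals
because `O_K` is principal: rounding coordinates in the basis `1, (1 + √5) / 2` makes it
norm-Euclidean. The second claim holds because `Δ = 16 ((abc)²)^p` and `16 ∉ 𝔮`.
-/

section NormEuclidean

open NumberField QuadraticAlgebra

theorem natAbs_norm_lt_natAbs_norm_iff {F : Type*} [Field F] [NumberField F] {x y : 𝓞 F} :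
    (Algebra.norm ℤ x).natAbs < (Algebra.norm ℤ y).natAbs ↔
      |Algebra.norm ℚ (x : F)| < |Algebra.norm ℚ (y : F)| := by
  rw [← Nat.cast_lt (α := ℚ), Nat.cast_natAbs, Nat.cast_natAbs, Int.cast_abs, Int.cast_abs,
    Algebra.coe_norm_int, Algebra.coe_norm_int]

theorem isPrincipalIdealRing_of_exists_norm_sub_lt_one {F : Type*} [Field F] [NumberField F]
    (h : ∀ z : F, ∃ w : 𝓞 F, |Algebra.norm ℚ (z - w)| < 1) : IsPrincipalIdealRing (𝓞 F) := by
  classical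
  choose q hq using h
  have remainder_lt (x : 𝓞 F) {y : 𝓞 F} (hy : y ≠ 0) :
      |Algebra.norm ℚ ((x - y * q (x / y) : 𝓞 F) : F)| < |Algebra.norm ℚ (y : F)| := by
    have hyF : (y : F) ≠ 0 := RingOfIntegers.coe_ne_zero_iff.mpr hy
    calc |Algebra.norm ℚ ((x - y * q (x / y) : 𝓞 F) : F)|
        = |Algebra.norm ℚ (y : F)| * |Algebra.norm ℚ ((x / y : F) - q (x / y))| := by
          rw [← abs_mul, ← map_mul (Algebra.norm ℚ), mul_sub, mul_div_cancel₀ _ hyF]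
          rfl
      _ < |Algebra.norm ℚ (y : F)| :=
          mul_lt_of_lt_one_right (abs_pos.mpr (Algebra.norm_ne_zero_iff.mpr hyF)) (hq _)
  let _ : EuclideanDomain (𝓞 F) :=
    { quotient x y := if y = 0 then 0 else q (x / y)
      quotient_zero _ := if_pos rfl
      remainder x y := if y = 0 then x else x - y * q (x / y)
      quotient_mul_add_remainder_eq x y := by split_ifs with hy <;> simp [hy]
      r x y := (Algebra.norm ℤ x).natAbs < (Algebra.norm ℤ y).natAbs
      r_wellFounded := (measure fun x : 𝓞 F => (Algebra.norm ℤ x).natAbs).wf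
      remainder_lt x y hy := by
        rw [if_neg hy, natAbs_norm_lt_natAbs_norm_iff]
        exact remainder_lt x hy
      mul_left_not_lt x y hy := by
        rw [not_lt, map_mul, Int.natAbs_mul]
        exact Nat.le_mul_of_pos_right _
          (Int.natAbs_pos.mpr (Algebra.norm_ne_zero_iff.mpr hy)) }
  exact EuclideanDomain.to_principal_ideal_domain

theorem norm_eq_quadraticAlgebra_norm {R : Type*} [CommRing R] {a b : R}
    (z : QuadraticAlgebra R a b) : Algebra.norm R z = z.norm :=
  det_toLinearMap_eq_norm z

theorem isIntegral_mk_intCast {R : Type*} [CommRing R] (a b m n : ℤ) :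
    IsIntegral ℤ (⟨m, n⟩ : QuadraticAlgebra R a b) := by
  have hω : (ω : QuadraticAlgebra R a b) * ω = a • 1 + b • ω := by
    rw [omega_mul_omega_eq_add, Int.cast_smul_eq_zsmul, Int.cast_smul_eq_zsmul]
  have hmk : lift ⟨ω, hω⟩ (⟨m, n⟩ : QuadraticAlgebra ℤ a b) = ⟨m, n⟩ := by
    rw [lift_apply_apply]
    ext <;> simp
  exact hmk ▸ (IsIntegral.of_finite ℤ (⟨m, n⟩ : QuadraticAlgebra ℤ a b)).map (lift ⟨ω, hω⟩)

theorem isPrincipalIdealRing_of_algEquiv_quadraticAlgebra {F : Type*} [Field F] [NumberField F]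
    {a b : ℤ} (e : QuadraticAlgebra ℚ a b ≃ₐ[ℚ] F)
    (h : ∀ z : QuadraticAlgebra ℚ a b, |z.re| ≤ 1 / 2 → |z.im| ≤ 1 / 2 → |z.norm| < 1) :
    IsPrincipalIdealRing (𝓞 F) := by
  refine isPrincipalIdealRing_of_exists_norm_sub_lt_one fun x => ?_
  obtain ⟨z, rfl⟩ := e.surjective x
  let w : QuadraticAlgebra ℚ a b := ⟨round z.re, round z.im⟩
  have hw : IsIntegral ℤ (e w) :=
    (isIntegral_mk_intCast a b _ _).map (e.toAlgHom.restrictScalars ℤ)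
  refine ⟨⟨e w, hw⟩, ?_⟩
  change |Algebra.norm ℚ (e z - e w)| < 1
  rw [← map_sub, Algebra.norm_eq_of_algEquiv, norm_eq_quadraticAlgebra_norm]
  exact h _ (abs_sub_round z.re) (abs_sub_round z.im)

end NormEuclidean

namespace K

/-- The embedding of `ℚ[ω]`, `ω² = 1 + ω`, into `ℝ` sending `ω` to the golden ratio. -/
noncomputable def goldenEmbedding : QuadraticAlgebra ℚ 1 1 →ₐ[ℚ] ℝ :=
  QuadraticAlgebra.lift ⟨Real.goldenRatio, by
    simp only [one_smul, ← sq, Real.goldenRatio_sq, add_comm]⟩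

theorem goldenEmbedding_apply (z : QuadraticAlgebra ℚ 1 1) :
    goldenEmbedding z = z.re + z.im * Real.goldenRatio := by
  rw [goldenEmbedding, QuadraticAlgebra.lift_apply_apply, Rat.smul_one_eq_cast, Rat.smul_def]

instance fact_sq_ne_one_add_self : Fact (∀ r : ℚ, r ^ 2 ≠ 1 + 1 * r) where
  out r hr := by
    have h5 : ¬ IsSquare (5 : ℚ) := by norm_num
    exact h5 ⟨2 * r - 1, by linear_combination -4 * hr⟩

theorem sqrt_five_mem : √5 ∈ K := IntermediateField.mem_adjoin_simple_self ℚ _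

theorem goldenRatio_mem : Real.goldenRatio ∈ K :=
  K.div_mem (K.add_mem K.one_mem sqrt_five_mem) (ofNat_mem K 2)

theorem fieldRange_goldenEmbedding : goldenEmbedding.fieldRange = K := by
  apply le_antisymm
  · rintro _ ⟨z, rfl⟩
    change goldenEmbedding z ∈ K
    rw [goldenEmbedding_apply]
    exact K.add_mem (K.algebraMap_mem z.re) (K.mul_mem (K.algebraMap_mem z.im) goldenRatio_mem)
  · refine IntermediateField.adjoin_simple_le_iff.mpr ⟨⟨-1, 2⟩, ?_⟩
    calc goldenEmbedding ⟨-1, 2⟩ = -1 + 2 * Real.goldenRatio := by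
          rw [goldenEmbedding_apply]; norm_num
      _ = √5 := by rw [Real.goldenRatio]; ring

/-- The isomorphism `ℚ[ω] ≃ K`, `ω² = 1 + ω`, sending `ω` to the golden ratio. Rounding
coordinates in the basis `1, √5` instead of `1, ω` could leave a remainder of norm `-1`. -/
noncomputable def quadraticAlgebraEquiv : QuadraticAlgebra ℚ 1 1 ≃ₐ[ℚ] K :=
  (AlgEquiv.ofInjectiveField goldenEmbedding).trans
    (IntermediateField.equivOfEq fieldRange_goldenEmbedding)

instance numberField : NumberField K where
  to_charZero := inferInstance
  to_finiteDimensional := Module.Finite.equiv quadraticAlgebraEquiv.toLinearEquiv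

instance isPrincipalIdealRing_ringOfIntegers : IsPrincipalIdealRing OK := by
  refine isPrincipalIdealRing_of_algEquiv_quadraticAlgebra (a := 1) (b := 1)
    quadraticAlgebraEquiv fun z hre him => ?_
  rw [abs_le] at hre him
  rw [QuadraticAlgebra.norm_def, abs_lt]
  push_cast
  constructor <;> nlinarith

end K

section Ideal

variable {R : Type*} [CommRing R]

theorem span_eq_top_of_forall_dvd_isUnit [IsPrincipalIdealRing R] {s : Set R}
    (h : ∀ d, (∀ x ∈ s, d ∣ x) → IsUnit d) : Ideal.span s = ⊤ := by
  obtain ⟨d, hd⟩ := (IsPrincipalIdealRing.principal (Ideal.span s)).principal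
  rw [Ideal.submodule_span_eq] at hd
  rw [hd, Ideal.span_singleton_eq_top]
  exact h d fun x hx => Ideal.mem_span_singleton.mp (hd ▸ Ideal.subset_span hx)

theorem pow_three_mem_of_add_add_eq_zero {I : Ideal R} {A B C : R} (h : A + B + C = 0)
    (hABC : A * B * C ∈ I) (hAB : A ^ 2 + A * B + B ^ 2 ∈ I) : A ^ 3 ∈ I := by
  have hA : A ^ 3 = (A ^ 2 + A * B + B ^ 2) * A + A * B * C := by
    linear_combination -(A * B) * h
  exact hA ▸ I.add_mem (I.mul_mem_right A hAB) hABC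

theorem span_triple_le_of_pow_add_pow_add_pow_eq_zero {I : Ideal R} (hI : I.IsRadical)
    {a b c : R} {n : ℕ} (h : a ^ n + b ^ n + c ^ n = 0) (habc : a ^ n * b ^ n * c ^ n ∈ I)
    (hab : (a ^ n) ^ 2 + a ^ n * b ^ n + (b ^ n) ^ 2 ∈ I) : Ideal.span {a, b, c} ≤ I := by
  have mem {x : R} (hx : (x ^ n) ^ 3 ∈ I) : x ∈ I := hI ⟨n * 3, pow_mul x n 3 ▸ hx⟩
  have ha : a ∈ I := mem (pow_three_mem_of_add_add_eq_zero h habc hab)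
  have hb : b ∈ I := mem <| pow_three_mem_of_add_add_eq_zero (B := a ^ n) (C := c ^ n)
    (by linear_combination h) (by convert habc using 1; ring) (by convert hab using 1; ring)
  have hc : c ∈ I := mem <| pow_three_mem_of_add_add_eq_zero (B := b ^ n) (C := a ^ n)
    (by linear_combination h) (by convert habc using 1; ring)
    (by convert hab using 1; linear_combination (c ^ n - a ^ n) * h)
  simp [Ideal.span_le, Set.insert_subset_iff, ha, hb, hc]

theorem emultiplicity_span_singleton_eq_coe [IsDedekindDomain R] {I : Ideal R} {x : R} {k : ℕ} :
    emultiplicity I (Ideal.span {x}) = k ↔ x ∈ I ^ k ∧ x ∉ I ^ (k + 1) := by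
  rw [emultiplicity_eq_coe, Ideal.dvd_span_singleton, Ideal.dvd_span_singleton]

theorem exists_mul_pow_mem_pow_mul_and_notMem [IsDedekindDomain R] {P : Ideal R} [P.IsPrime]
    (hP : P ≠ ⊥) {u x : R} (hu : u ∉ P) (hx : x ≠ 0) (n : ℕ) :
    ∃ k : ℕ, u * x ^ n ∈ P ^ (n * k) ∧ u * x ^ n ∉ P ^ (n * k + 1) := by
  have hprime : Prime P := Ideal.prime_of_isPrime hP inferInstance
  have hu0 : emultiplicity P (Ideal.span {u}) = 0 :=
    emultiplicity_eq_zero.mpr (mt Ideal.dvd_span_singleton.mp hu)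
  have hfin : FiniteMultiplicity P (Ideal.span {x}) :=
    .of_prime_left hprime (mt Ideal.span_singleton_eq_bot.mp hx)
  refine ⟨multiplicity P (Ideal.span {x}), emultiplicity_span_singleton_eq_coe.mp ?_⟩
  rw [← Ideal.span_singleton_mul_span_singleton, ← Ideal.span_singleton_pow,
    emultiplicity_mul hprime, hu0, zero_add, emultiplicity_pow hprime,
    hfin.emultiplicity_eq_multiplicity, Nat.cast_mul]

end Ideal

theorem valuation_of_invariants_at_multiplicative_primes_general {R : Type*} [CommRing R]
    [IsDedekindDomain R] {n : ℕ} (hn : n ≠ 0) {a b c : R} (ha : a ≠ 0) (hb : b ≠ 0) (hc : c ≠ 0)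
    (hfermat : a ^ n + b ^ n + c ^ n = 0) {A B C : R} (hA : A = a ^ n) (hB : B = b ^ n)
    (hC : C = c ^ n) {𝔮 : Ideal R} (h𝔮 : 𝔮.IsPrime) (h2 : (2 : R) ∉ 𝔮)
    (hcop : ¬ Ideal.span {a, b, c} ≤ 𝔮) (habc : a * b * c ∈ 𝔮) :
    16 * (A ^ 2 + A * B + B ^ 2) ∉ 𝔮 ∧
    ∃ k : ℕ, 16 * (A * B * C) ^ 2 ∈ 𝔮 ^ (n * k) ∧
      16 * (A * B * C) ^ 2 ∉ 𝔮 ^ (n * k + 1) := by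
  subst hA hB hC
  have h16 : (16 : R) ∉ 𝔮 := fun h => h2 (h𝔮.mem_of_pow_mem 4 (by norm_num [h]))
  have habc0 : a * b * c ≠ 0 := mul_ne_zero (mul_ne_zero ha hb) hc
  have h𝔮0 : 𝔮 ≠ ⊥ := Submodule.ne_bot_iff _ |>.mpr ⟨_, habc, habc0⟩
  have hABC : a ^ n * b ^ n * c ^ n = (a * b * c) ^ n := by rw [mul_pow, mul_pow]
  constructor
  · intro hc₄
    exact hcop (span_triple_le_of_pow_add_pow_add_pow_eq_zero h𝔮.isRadical hfermat
      (hABC ▸ 𝔮.pow_mem_of_mem habc n hn.bot_lt) ((h𝔮.mem_or_mem hc₄).resolve_left h16))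
  · rw [hABC, pow_right_comm]
    exact exists_mul_pow_mem_pow_mul_and_notMem h𝔮0 h16 (pow_ne_zero 2 habc0) n

set_option maxHeartbeats 1000000 in
/-- **Lemma 2 (partial).** Let `p ≥ 5` be prime, `a, b, c` nonzero coprime elements
of `O_K` with `a^p + b^p + c^p = 0`, and `A = a^p`, `B = b^p`, `C = c^p`.  If `𝔮`
is a nonzero prime ideal of `O_K` not containing `2` with `v_𝔮(a·b·c) ≥ 1`, then
`v_𝔮(c₄) = 0` and `p ∣ v_𝔮(Δ)`, where `c₄ = 16(A² + AB + B²)` and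
`Δ = 16(ABC)²`. -/
theorem valuation_of_invariants_at_multiplicative_primes
    (p : ℕ) (hp : p.Prime) (hp5 : 5 ≤ p)
    (a b c : OK) (ha : a ≠ 0) (hb : b ≠ 0) (hc : c ≠ 0)
    (hcop : ∀ d : OK, d ∣ a → d ∣ b → d ∣ c → IsUnit d)
    (hfermat : a ^ p + b ^ p + c ^ p = 0)
    (A B C : OK) (hA : A = a ^ p) (hB : B = b ^ p) (hC : C = c ^ p)
    (𝔮 : Ideal OK) (h𝔮 : 𝔮.IsPrime) (h𝔮0 : 𝔮 ≠ ⊥) (h2 : (2 : OK) ∉ 𝔮)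
    (habc : a * b * c ∈ 𝔮) :
    16 * (A ^ 2 + A * B + B ^ 2) ∉ 𝔮 ∧
    ∃ k : ℕ, 16 * (A * B * C) ^ 2 ∈ 𝔮 ^ (p * k) ∧
      16 * (A * B * C) ^ 2 ∉ 𝔮 ^ (p * k + 1) := by
  have hspan : Ideal.span {a, b, c} = ⊤ :=
    span_eq_top_of_forall_dvd_isUnit (by simpa using hcop)
  exact valuation_of_invariants_at_multiplicative_primes_general hp.ne_zero ha hb hc hfermat hA hB
    hC h𝔮 h2 (fun hle => h𝔮.ne_top (top_le_iff.mp (hspan ▸ hle))) habc
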